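/- (Two-sided control under the tail condition, frequentist version of Theorem 4(i).) Let 0 < t₀ < τ, N₀ ≥ 1, and let A satisfy 1 + t₀ < A < 1 + τ; set α = f_o(A,t₀) and β = g_o(A,τ). Then α > 0, β > 0, and for every θ in the tail class 𝒯(τ,t₀,N₀) and all integers n₁ ≥ 1 and n₂ ≥ N₀: P_θ({x : ∃ d ≥ 1 with (d < d_τ(θ) − n₁ or d > d_τ(θ) + n₂) and crit_A(x,d) ≤ crit_A(x,d_τ(θ))}) ≤ e^{−αn₂}/(1−e^{−α}) + e^{−βn₁}/(1−e^{−β}). -/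

import Mathlib

/-!
Between two dimensions, the criterion changes by `A ε²` per coordinate minus the observed energy of
the block of coordinates that separates them. A competitor above the effective dimension can win
only if a block whose true energy is at most `t₀ ε²` per coordinate shows an observed energy of at
least `A ε²` per coordinate, although `1 + t₀ < A`. A competitor below can win only if a block shows
at most `A ε² < (1 + τ) ε²` per coordinate, although minimality of the quantization error forces its
true energy to be at least `τ ε²` per coordinate. Squares of Gaussians have an explicit cumulant
generating function, and the Chernoff bound at the parameter `h / (2 ε²)` has exponent `f(h, A, t)`
per coordinate. Optimizing over `h` and summing geometrically over the block lengths concludes.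
-/

open MeasureTheory ProbabilityTheory

noncomputable section

/-- Tail sum `∑_{i>d} θ_i²` (indices `i = 1,2,…`). -/
def tailSum (θ : ℕ → ℝ) (d : ℕ) : ℝ := ∑' i : ℕ, if d < i then θ i ^ 2 else 0

/-- The τ-quantization error `r_τ(d,θ) = ∑_{i>d} θ_i² + τ d ε²`. -/
def rErr (ε τ : ℝ) (θ : ℕ → ℝ) (d : ℕ) : ℝ := tailSum θ d + τ * d * ε ^ 2

/-- The local effective τ-dimension: the smallest `d ≥ 1` minimizing `r_τ(·,θ)` over `d ≥ 1`. -/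
def effDim (ε τ : ℝ) (θ : ℕ → ℝ) : ℕ :=
  sInf {d : ℕ | 1 ≤ d ∧ ∀ d' : ℕ, 1 ≤ d' → rErr ε τ θ d ≤ rErr ε τ θ d'}

/-- The penalized criterion `crit_A(x,d) = -∑_{i=1}^d x_i² + A ε² d`. -/
def critF (ε A : ℝ) (x : ℕ → ℝ) (d : ℕ) : ℝ :=
  -(∑ i ∈ Finset.Icc 1 d, x i ^ 2) + A * ε ^ 2 * d

/-- `f(h,a,t) = (1/2)(a h + log(1-h) - t h/(1-h))`. -/
def fFun (h a t : ℝ) : ℝ := (a * h + Real.log (1 - h) - t * h / (1 - h)) / 2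

/-- `g(h,a,t) = f(-h,a,t)`. -/
def gFun (h a t : ℝ) : ℝ := fFun (-h) a t

/-- `f_o(a,t) = sup_{h ∈ [0,1)} f(h,a,t)`. -/
def fSup (a t : ℝ) : ℝ := sSup ((fun h => fFun h a t) '' Set.Ico 0 1)

/-- `g_o(a,t) = sup_{h ∈ [0,1]} g(h,a,t)`. -/
def gSup (a t : ℝ) : ℝ := sSup ((fun h => gFun h a t) '' Set.Icc 0 1)

/-- `P` is the infinite product measure `⨂_{i≥1} N(θ_i, ε²)` on the sequence space `ℝ^ℕ`,
characterized by being a probability measure whose finite-dimensional projections onto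
the coordinates `1,…,n` are the corresponding finite products of Gaussians. -/
def IsGaussianProduct (ε : ℝ) (θ : ℕ → ℝ) (P : Measure (ℕ → ℝ)) : Prop :=
  IsProbabilityMeasure P ∧
  ∀ n : ℕ, P.map (fun x (i : Fin n) => x ((i : ℕ) + 1)) =
    Measure.pi fun i : Fin n => gaussianReal (θ ((i : ℕ) + 1)) ((ε ^ 2).toNNReal)

open Filter Topology
open scoped NNReal

section Exponents

variable {a t : ℝ}

lemma exists_mem_Ioo_pos_of_hasDerivAt {f : ℝ → ℝ} {f' x b : ℝ} (hf : HasDerivAt f f' x)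
    (hf' : 0 < f') (hx : f x = 0) (hb : x < b) : ∃ y ∈ Set.Ioo x b, 0 < f y := by
  have hsign := eventually_nhdsWithin_sign_eq_of_deriv_pos (hf.deriv.symm ▸ hf') hx
  obtain ⟨y, hy, hmem⟩ :=
    ((eventually_nhdsWithin_of_eventually_nhds hsign).and (Ioo_mem_nhdsGT hb)).exists
  exact ⟨y, hmem, by rwa [sign_pos (sub_pos.2 hmem.1), sign_eq_one_iff] at hy⟩

lemma hasDerivAt_fFun_zero (a t : ℝ) : HasDerivAt (fun h => fFun h a t) ((a - 1 - t) / 2) 0 := by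
  have hid := hasDerivAt_id (0 : ℝ)
  have hsub : HasDerivAt (fun h : ℝ => 1 - h) (-1) 0 := hid.const_sub 1
  have hlog := hsub.log (by norm_num)
  have hfrac := (hid.const_mul t).fun_div hsub (by norm_num)
  refine ((((hid.const_mul a).fun_add hlog).fun_sub hfrac).div_const 2).congr_deriv ?_
  simp only [id_eq, sub_zero, mul_zero, zero_mul]
  ring

lemma hasDerivAt_gFun_zero (a t : ℝ) : HasDerivAt (fun h => gFun h a t) ((1 + t - a) / 2) 0 := by
  have hf : HasDerivAt (fun h => fFun h a t) ((a - 1 - t) / 2) (-0) := by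
    simpa only [neg_zero] using hasDerivAt_fFun_zero a t
  exact (hf.comp (0 : ℝ) (hasDerivAt_neg 0)).congr_deriv (by ring)

lemma bddAbove_image_fFun (a : ℝ) (ht : 0 ≤ t) :
    BddAbove ((fun h => fFun h a t) '' Set.Ico 0 1) := by
  refine ⟨|a| / 2, ?_⟩
  rintro _ ⟨h, ⟨h0, h1⟩, rfl⟩
  have hlin : a * h ≤ |a| := (mul_le_mul_of_nonneg_right (le_abs_self a) h0).trans
    (mul_le_of_le_one_right (abs_nonneg a) h1.le)
  have hlog : Real.log (1 - h) ≤ 0 := Real.log_nonpos (by linarith) (by linarith)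
  have hfrac : 0 ≤ t * h / (1 - h) := div_nonneg (by positivity) (by linarith)
  simp only [fFun]
  linarith

lemma bddAbove_image_gFun (a t : ℝ) : BddAbove ((fun h => gFun h a t) '' Set.Icc 0 1) := by
  refine isCompact_Icc.bddAbove_image ?_
  have hne : ∀ h ∈ Set.Icc (0 : ℝ) 1, 1 - -h ≠ 0 := fun h hh => by linarith [hh.1]
  unfold gFun fFun
  fun_prop (disch := assumption)

lemma fSup_pos (ht : 0 ≤ t) (hat : 1 + t < a) : 0 < fSup a t := by
  obtain ⟨h, hh, hpos⟩ := exists_mem_Ioo_pos_of_hasDerivAt (hasDerivAt_fFun_zero a t)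
    (by linarith) (by simp [fFun]) one_pos
  exact hpos.trans_le (le_csSup (bddAbove_image_fFun a ht) ⟨h, Set.Ioo_subset_Ico_self hh, rfl⟩)

lemma gSup_pos (hat : a < 1 + t) : 0 < gSup a t := by
  obtain ⟨h, hh, hpos⟩ := exists_mem_Ioo_pos_of_hasDerivAt (hasDerivAt_gFun_zero a t)
    (by linarith) (by simp [gFun, fFun]) one_pos
  exact hpos.trans_le (le_csSup (bddAbove_image_gFun a t) ⟨h, Set.Ioo_subset_Icc_self hh, rfl⟩)

lemma le_exp_neg_mul_sSup {S : Set ℝ} (hS : S.Nonempty) {k p : ℝ} (hk : 0 ≤ k)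
    (hp : ∀ s ∈ S, p ≤ Real.exp (-(k * s))) : p ≤ Real.exp (-(k * sSup S)) := by
  rcases le_or_gt p 0 with hp0 | hp0
  · exact hp0.trans (Real.exp_nonneg _)
  rw [← Real.log_le_iff_le_exp hp0, le_neg, ← smul_eq_mul, ← Real.sSup_smul_of_nonneg hk]
  refine csSup_le hS.smul_set ?_
  rintro _ ⟨s, hs, rfl⟩
  exact le_neg.1 ((Real.log_le_iff_le_exp hp0).2 (hp s hs))

end Exponents

section GaussianSquares

variable {μ : ℝ} {v : ℝ≥0} {s : ℝ}

lemma gaussianPDFReal_mul_exp_mul_sq (hv : v ≠ 0) (hs : 2 * v * s < 1) (x : ℝ) :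
    gaussianPDFReal μ v x * Real.exp (s * x ^ 2) =
      (√(1 - 2 * v * s))⁻¹ * Real.exp (s * μ ^ 2 / (1 - 2 * v * s)) *
        gaussianPDFReal (μ / (1 - 2 * v * s)) (v / (1 - 2 * v * s).toNNReal) x := by
  obtain ⟨w, hw⟩ : ∃ w, w = 1 - 2 * v * s := ⟨_, rfl⟩
  have hw0 : 0 < w := by linarith
  have hsquare : s * x ^ 2 - (x - μ) ^ 2 / (2 * v) =
      s * μ ^ 2 / w - (x - μ / w) ^ 2 / (2 * (v / w)) := by
    obtain rfl : s = (1 - w) / (2 * v) := by rw [hw]; field_simp; ring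
    field_simp
    ring
  have hsqrt : √(2 * Real.pi * (v / w)) = √(2 * Real.pi * v) / √w := by
    rw [← mul_div_assoc, Real.sqrt_div (by positivity)]
  simp only [gaussianPDFReal, NNReal.coe_div, ← hw, Real.coe_toNNReal w hw0.le, hsqrt]
  calc _ = (√(2 * Real.pi * v))⁻¹ * Real.exp (s * x ^ 2 - (x - μ) ^ 2 / (2 * v)) := by
        rw [mul_assoc, ← Real.exp_add]; ring_nf
    _ = (√w)⁻¹ * √w * (√(2 * Real.pi * v))⁻¹ *
          Real.exp (s * μ ^ 2 / w - (x - μ / w) ^ 2 / (2 * (v / w))) := by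
        rw [inv_mul_cancel₀ (by positivity), one_mul, hsquare]
    _ = _ := by rw [sub_eq_add_neg, Real.exp_add, inv_div]; ring_nf

lemma mgf_sq_gaussianReal (hs : 2 * v * s < 1) :
    mgf (fun x => x ^ 2) (gaussianReal μ v) s =
      (√(1 - 2 * v * s))⁻¹ * Real.exp (s * μ ^ 2 / (1 - 2 * v * s)) := by
  rcases eq_or_ne v 0 with rfl | hv
  · simp [gaussianReal_zero_var, mgf_dirac']
  have hw : v / (1 - 2 * v * s).toNNReal ≠ 0 := div_ne_zero hv (by simpa using hs)
  simp only [mgf, integral_gaussianReal_eq_integral_smul hv, smul_eq_mul,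
    gaussianPDFReal_mul_exp_mul_sq hv hs, integral_const_mul,
    integral_gaussianPDFReal_eq_one _ hw, mul_one]

lemma integrable_exp_mul_sq_gaussianReal (hs : 2 * v * s < 1) :
    Integrable (fun x => Real.exp (s * x ^ 2)) (gaussianReal μ v) := by
  refine .of_integral_ne_zero (ne_of_gt ?_)
  have : 0 < 1 - 2 * v * s := sub_pos.2 hs
  calc 0 < (√(1 - 2 * v * s))⁻¹ * Real.exp (s * μ ^ 2 / (1 - 2 * v * s)) := by positivity
    _ = ∫ x, Real.exp (s * x ^ 2) ∂gaussianReal μ v := (mgf_sq_gaussianReal hs).symm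

lemma cgf_sq_gaussianReal (hs : 2 * v * s < 1) :
    cgf (fun x => x ^ 2) (gaussianReal μ v) s =
      s * μ ^ 2 / (1 - 2 * v * s) - Real.log (1 - 2 * v * s) / 2 := by
  have hw : 0 < 1 - 2 * v * s := sub_pos.2 hs
  rw [cgf, mgf_sq_gaussianReal hs, Real.log_mul (by positivity) (Real.exp_ne_zero _),
    Real.log_inv, Real.log_sqrt hw.le, Real.log_exp]
  ring

end GaussianSquares

section IndependentGaussians

variable {ι Ω : Type*} {mΩ : MeasurableSpace Ω} {P : Measure Ω} {X : ι → Ω → ℝ} {μ : ι → ℝ}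
  {v : ℝ≥0} {a t h : ℝ} {s : Finset ι}

lemma integrable_exp_mul_sum_sq [IsFiniteMeasure P] (hX : iIndepFun X P)
    (hlaw : ∀ i, MeasurePreserving (X i) P (gaussianReal (μ i) v)) {u : ℝ} (hu : 2 * v * u < 1) :
    Integrable (fun ω => Real.exp (u * ∑ i ∈ s, X i ω ^ 2)) P := by
  have hsq : iIndepFun (fun i ω => X i ω ^ 2) P := hX.comp (fun _ x => x ^ 2) (by fun_prop)
  simpa only [Finset.sum_apply] using hsq.integrable_exp_mul_sum
    (fun i => (hlaw i).measurable.pow_const 2) (s := s) fun i _ =>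
      (hlaw i).integrable_comp_of_integrable (integrable_exp_mul_sq_gaussianReal hu)

lemma cgf_sum_sq (hX : iIndepFun X P)
    (hlaw : ∀ i, MeasurePreserving (X i) P (gaussianReal (μ i) v)) {u : ℝ} (hu : 2 * v * u < 1) :
    cgf (fun ω => ∑ i ∈ s, X i ω ^ 2) P u =
      u * (∑ i ∈ s, μ i ^ 2) / (1 - 2 * v * u) - s.card * Real.log (1 - 2 * v * u) / 2 := by
  have hsq : iIndepFun (fun i ω => X i ω ^ 2) P := hX.comp (fun _ x => x ^ 2) (by fun_prop)
  have hcgf (i : ι) : cgf (fun ω => X i ω ^ 2) P u =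
      u * μ i ^ 2 / (1 - 2 * v * u) - Real.log (1 - 2 * v * u) / 2 := by
    rw [← cgf_sq_gaussianReal hu, cgf, cgf, ← (hlaw i).map_eq,
      mgf_map (hlaw i).aemeasurable (by fun_prop), Function.comp_def]
  have hsum := hsq.cgf_sum (fun i => (hlaw i).measurable.pow_const 2) (s := s) fun i _ =>
    (hlaw i).integrable_comp_of_integrable (integrable_exp_mul_sq_gaussianReal hu)
  rw [← Finset.sum_fn, hsum, Finset.sum_congr rfl fun i _ => hcgf i, Finset.sum_sub_distrib,
    ← Finset.sum_div, ← Finset.mul_sum, Finset.sum_const, nsmul_eq_mul]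
  ring

lemma chernoff_exponent_le (hX : iIndepFun X P)
    (hlaw : ∀ i, MeasurePreserving (X i) P (gaussianReal (μ i) v)) (hv : v ≠ 0) (hh : h < 1)
    (hμ : h * ∑ i ∈ s, μ i ^ 2 ≤ h * (t * v * s.card)) :
    -(h / (2 * v)) * (a * v * s.card) + cgf (fun ω => ∑ i ∈ s, X i ω ^ 2) P (h / (2 * v)) ≤
      -(s.card * fFun h a t) := by
  have hh0 : 0 < 1 - h := sub_pos.2 hh
  have hu : 2 * v * (h / (2 * v)) = h := by field_simp
  have henergy : h / (2 * v) * (∑ i ∈ s, μ i ^ 2) / (1 - h) ≤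
      s.card * (t * h / (1 - h)) / 2 := by
    calc _ = h * (∑ i ∈ s, μ i ^ 2) / (2 * v * (1 - h)) := by field_simp
      _ ≤ h * (t * v * s.card) / (2 * v * (1 - h)) := by gcongr
      _ = _ := by field_simp
  have hlevel : -(h / (2 * v)) * (a * v * s.card) = -(s.card * (a * h) / 2) := by field_simp
  rw [cgf_sum_sq hX hlaw (hu.trans_lt hh), hu, hlevel]
  simp only [fFun]
  linarith

lemma measureReal_le_sum_sq_le_exp_fSup [IsFiniteMeasure P] (hX : iIndepFun X P)
    (hlaw : ∀ i, MeasurePreserving (X i) P (gaussianReal (μ i) v)) (hv : v ≠ 0)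
    (hμ : ∑ i ∈ s, μ i ^ 2 ≤ t * v * s.card) :
    P.real {ω | a * v * s.card ≤ ∑ i ∈ s, X i ω ^ 2} ≤ Real.exp (-(s.card * fSup a t)) := by
  refine le_exp_neg_mul_sSup (Set.Nonempty.image _ ⟨0, by simp⟩) (by positivity) ?_
  rintro _ ⟨h, ⟨h0, h1⟩, rfl⟩
  have hu : 2 * v * (h / (2 * v)) < 1 := by rwa [mul_div_cancel₀ h (by positivity)]
  exact (measure_ge_le_exp_cgf _ (by positivity) (integrable_exp_mul_sum_sq hX hlaw hu)).trans
    (Real.exp_le_exp.2 (chernoff_exponent_le hX hlaw hv h1 (by gcongr)))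

lemma measureReal_sum_sq_le_le_exp_gSup [IsFiniteMeasure P] (hX : iIndepFun X P)
    (hlaw : ∀ i, MeasurePreserving (X i) P (gaussianReal (μ i) v)) (hv : v ≠ 0)
    (hμ : t * v * s.card ≤ ∑ i ∈ s, μ i ^ 2) :
    P.real {ω | ∑ i ∈ s, X i ω ^ 2 ≤ a * v * s.card} ≤ Real.exp (-(s.card * gSup a t)) := by
  refine le_exp_neg_mul_sSup (Set.Nonempty.image _ ⟨0, by simp⟩) (by positivity) ?_
  rintro _ ⟨h, ⟨h0, -⟩, rfl⟩
  have hh : -h ≤ 0 := neg_nonpos.2 h0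
  have hu : 2 * v * (-h / (2 * v)) < 1 := by
    rw [mul_div_cancel₀ (-h) (by positivity)]; linarith
  exact (measure_le_le_exp_cgf _ (div_nonpos_of_nonpos_of_nonneg hh (by positivity))
    (integrable_exp_mul_sum_sq hX hlaw hu)).trans (Real.exp_le_exp.2
      (chernoff_exponent_le hX hlaw hv (by linarith) (mul_le_mul_of_nonpos_left hμ hh)))

end IndependentGaussians

namespace IsGaussianProduct

variable {ε : ℝ} {θ : ℕ → ℝ} {P : Measure (ℕ → ℝ)}

lemma measurePreserving_coord (hP : IsGaussianProduct ε θ P) (i : ℕ) :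
    MeasurePreserving (fun x => x (i + 1)) P (gaussianReal (θ (i + 1)) (ε ^ 2).toNNReal) := by
  have hproj : MeasurePreserving (fun x (j : Fin (i + 1)) => x ((j : ℕ) + 1)) P
      (Measure.pi fun j : Fin (i + 1) => gaussianReal (θ ((j : ℕ) + 1)) (ε ^ 2).toNNReal) :=
    ⟨by fun_prop, hP.2 (i + 1)⟩
  exact (measurePreserving_eval _ (Fin.last i)).comp hproj

lemma iIndepFun_coord (hP : IsGaussianProduct ε θ P) :
    iIndepFun (fun i (x : ℕ → ℝ) => x (i + 1)) P := by
  have := hP.1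
  have hfin (n : ℕ) : iIndepFun (fun (i : Fin n) (x : ℕ → ℝ) => x ((i : ℕ) + 1)) P := by
    rw [iIndepFun_iff_map_fun_eq_pi_map fun i => (measurable_pi_apply _).aemeasurable, hP.2 n]
    simp only [fun i => (hP.measurePreserving_coord i).map_eq]
  rw [iIndepFun_iff_finset]
  intro s
  have hlt (i : s) : (i : ℕ) < s.sup id + 1 := Nat.lt_succ_of_le (Finset.le_sup (f := id) i.2)
  exact (hfin (s.sup id + 1)).precomp (g := fun i : s => ⟨i, hlt i⟩) fun i j hij =>
    Subtype.ext (Fin.mk.inj hij)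

end IsGaussianProduct

section Criterion

lemma sum_Icc_add_one_eq_sum_Ico {M : Type*} [AddCommMonoid M] (u : ℕ → M) (d k : ℕ) :
    ∑ i ∈ Finset.Icc (d + 1) (d + k), u i = ∑ i ∈ Finset.Ico d (d + k), u (i + 1) := by
  rw [Finset.sum_Ico_add']
  rfl

lemma critF_add_sub_critF (ε A : ℝ) (x : ℕ → ℝ) (d k : ℕ) :
    critF ε A x (d + k) - critF ε A x d =
      A * ε ^ 2 * k - ∑ i ∈ Finset.Ico d (d + k), x (i + 1) ^ 2 := by
  have hIcc (n : ℕ) : ∑ i ∈ Finset.Icc 1 n, x i ^ 2 = ∑ i ∈ Finset.range n, x (i + 1) ^ 2 := by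
    simpa using sum_Icc_add_one_eq_sum_Ico (fun i => x i ^ 2) 0 n
  simp only [critF, hIcc, Finset.sum_Ico_eq_sub _ (Nat.le_add_right d k), Nat.cast_add]
  ring

lemma sum_range_add_tailSum {θ : ℕ → ℝ} (hθ : Summable fun i => θ i ^ 2) (d : ℕ) :
    ∑ i ∈ Finset.range (d + 1), θ i ^ 2 + tailSum θ d = ∑' i, θ i ^ 2 := by
  rw [← hθ.sum_add_tsum_compl (s := Finset.range (d + 1)),
    tsum_subtype _ fun i => θ i ^ 2]
  simp [tailSum, Set.indicator_apply]

lemma tailSum_eq_sum_add_tailSum {θ : ℕ → ℝ} (hθ : Summable fun i => θ i ^ 2) (d k : ℕ) :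
    tailSum θ d = ∑ i ∈ Finset.Ico d (d + k), θ (i + 1) ^ 2 + tailSum θ (d + k) := by
  have hd := sum_range_add_tailSum hθ d
  have hdk := sum_range_add_tailSum hθ (d + k)
  rw [Finset.sum_Ico_add' (fun i => θ i ^ 2), Finset.sum_Ico_eq_sub _ (by omega)]
  linarith

lemma rErr_effDim_le {ε τ : ℝ} {θ : ℕ → ℝ} (hpos : 0 < effDim ε τ θ) {d : ℕ} (hd : 1 ≤ d) :
    rErr ε τ θ (effDim ε τ θ) ≤ rErr ε τ θ d :=
  (Nat.sInf_mem (Nat.nonempty_of_pos_sInf hpos)).2 d hd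

lemma le_sum_sq_of_add_eq_effDim {ε τ : ℝ} {θ : ℕ → ℝ} (hθ : Summable fun i => θ i ^ 2) {d k : ℕ}
    (hd : 1 ≤ d) (hdk : d + k = effDim ε τ θ) :
    τ * ε ^ 2 * k ≤ ∑ i ∈ Finset.Ico d (d + k), θ (i + 1) ^ 2 := by
  have hmin := rErr_effDim_le (ε := ε) (τ := τ) (θ := θ) (by omega) hd
  simp only [← hdk, rErr, tailSum_eq_sum_add_tailSum hθ d k, Nat.cast_add] at hmin
  linarith

end Criterion

lemma measureReal_exists_ge_le_of_le_exp {Ω : Type*} {mΩ : MeasurableSpace Ω} {P : Measure Ω}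
    [IsFiniteMeasure P] {p : ℕ → Ω → Prop} {α : ℝ} (hα : 0 < α) {n : ℕ}
    (hp : ∀ k ≥ n, P.real {ω | p k ω} ≤ Real.exp (-(k * α))) :
    P.real {ω | ∃ k ≥ n, p k ω} ≤ Real.exp (-α * n) / (1 - Real.exp (-α)) := by
  have hr : Real.exp (-α) < 1 := by simpa using hα
  have hgeom : HasSum (fun j : ℕ => Real.exp (-((n + j : ℕ) * α)))
      (Real.exp (-α * n) / (1 - Real.exp (-α))) := by
    have hterm (j : ℕ) : Real.exp (-((n + j : ℕ) * α)) = Real.exp (-α * n) * Real.exp (-α) ^ j := by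
      rw [← Real.exp_nat_mul, ← Real.exp_add]
      push_cast
      ring_nf
    simpa only [hterm, div_eq_mul_inv] using
      (hasSum_geometric_of_lt_one (Real.exp_nonneg _) hr).mul_left (Real.exp (-α * n))
  have hunion : {ω | ∃ k ≥ n, p k ω} = ⋃ j, {ω | p (n + j) ω} := by
    ext ω
    simp [le_iff_exists_add]
  refine ENNReal.toReal_le_of_le_ofReal (hgeom.nonneg fun j => Real.exp_nonneg _) ?_
  calc P {ω | ∃ k ≥ n, p k ω} ≤ ∑' j, P {ω | p (n + j) ω} := hunion ▸ measure_iUnion_le _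
    _ ≤ ∑' j, ENNReal.ofReal (Real.exp (-((n + j : ℕ) * α))) := by
        gcongr with j
        rw [← ofReal_measureReal]
        exact ENNReal.ofReal_le_ofReal (hp _ (Nat.le_add_right n j))
    _ = _ := by
        rw [← ENNReal.ofReal_tsum_of_nonneg (fun _ => Real.exp_nonneg _) hgeom.summable,
          hgeom.tsum_eq]

namespace IsGaussianProduct

variable {ε A t : ℝ} {θ : ℕ → ℝ} {P : Measure (ℕ → ℝ)}

lemma measureReal_critF_add_le (hP : IsGaussianProduct ε θ P) (hε : ε ≠ 0) {d k : ℕ}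
    (hθ : ∑ i ∈ Finset.Ico d (d + k), θ (i + 1) ^ 2 ≤ t * ε ^ 2 * k) :
    P.real {x | critF ε A x (d + k) ≤ critF ε A x d} ≤ Real.exp (-(k * fSup A t)) := by
  have := hP.1
  have hbound := measureReal_le_sum_sq_le_exp_fSup (a := A) (t := t) (s := Finset.Ico d (d + k))
    hP.iIndepFun_coord hP.measurePreserving_coord (by simpa using hε)
  simp only [Nat.card_Ico, Nat.add_sub_cancel_left, Real.coe_toNNReal _ (sq_nonneg ε)] at hbound
  simpa only [← sub_nonpos (b := critF _ _ _ _), critF_add_sub_critF, sub_nonpos] using hbound hθ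

lemma measureReal_critF_le_add (hP : IsGaussianProduct ε θ P) (hε : ε ≠ 0) {d k : ℕ}
    (hθ : t * ε ^ 2 * k ≤ ∑ i ∈ Finset.Ico d (d + k), θ (i + 1) ^ 2) :
    P.real {x | critF ε A x d ≤ critF ε A x (d + k)} ≤ Real.exp (-(k * gSup A t)) := by
  have := hP.1
  have hbound := measureReal_sum_sq_le_le_exp_gSup (a := A) (t := t) (s := Finset.Ico d (d + k))
    hP.iIndepFun_coord hP.measurePreserving_coord (by simpa using hε)
  simp only [Nat.card_Ico, Nat.add_sub_cancel_left, Real.coe_toNNReal _ (sq_nonneg ε)] at hbound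
  simpa only [← sub_nonneg (a := critF _ _ _ _), critF_add_sub_critF, sub_nonneg] using hbound hθ

lemma measureReal_exists_critF_add_le (hP : IsGaussianProduct ε θ P) (hε : ε ≠ 0)
    (hα : 0 < fSup A t) {m n : ℕ}
    (hθ : ∀ k ≥ n, ∑ i ∈ Finset.Ico m (m + k), θ (i + 1) ^ 2 ≤ t * ε ^ 2 * k) :
    P.real {x | ∃ k ≥ n, critF ε A x (m + k) ≤ critF ε A x m} ≤
      Real.exp (-(fSup A t) * n) / (1 - Real.exp (-(fSup A t))) := by
  have := hP.1
  exact measureReal_exists_ge_le_of_le_exp hα fun k hk => hP.measureReal_critF_add_le hε (hθ k hk)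

lemma measureReal_exists_critF_le_of_add_eq (hP : IsGaussianProduct ε θ P) (hε : ε ≠ 0)
    (hβ : 0 < gSup A t) {m n : ℕ}
    (hθ : ∀ d k, 1 ≤ d → d + k = m →
      t * ε ^ 2 * k ≤ ∑ i ∈ Finset.Ico d (d + k), θ (i + 1) ^ 2) :
    P.real {x | ∃ k ≥ n, ∃ d, 1 ≤ d ∧ d + k = m ∧ critF ε A x d ≤ critF ε A x m} ≤
      Real.exp (-(gSup A t) * n) / (1 - Real.exp (-(gSup A t))) := by
  have := hP.1
  refine measureReal_exists_ge_le_of_le_exp hβ fun k _ => ?_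
  by_cases hk : ∃ d, 1 ≤ d ∧ d + k = m
  · obtain ⟨d, hd, rfl⟩ := hk
    refine (measureReal_mono ?_).trans (hP.measureReal_critF_le_add hε (hθ d k hd rfl))
    rintro x ⟨d', -, hd', hx⟩
    rwa [Nat.add_right_cancel hd'] at hx
  · have hempty : {x | ∃ d, 1 ≤ d ∧ d + k = m ∧ critF ε A x d ≤ critF ε A x m} = ∅ :=
      Set.eq_empty_of_forall_notMem fun x ⟨d, hd, hdk, _⟩ => hk ⟨d, hd, hdk⟩
    rw [hempty, measureReal_empty]
    exact Real.exp_nonneg _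

end IsGaussianProduct

theorem stmt15 (ε τ t₀ A : ℝ) (hε : 0 < ε) (ht₀ : 0 < t₀) (ht₀τ : t₀ < τ)
    (N₀ : ℕ) (hN₀ : 1 ≤ N₀) (hA1 : 1 + t₀ < A) (hA2 : A < 1 + τ) :
    0 < fSup A t₀ ∧ 0 < gSup A τ ∧
    ∀ θ : ℕ → ℝ, Summable (fun i => θ i ^ 2) →
    (∀ d : ℕ, N₀ ≤ d →
      ∑ i ∈ Finset.Icc (effDim ε τ θ + 1) (effDim ε τ θ + d), θ i ^ 2 ≤ t₀ * ε ^ 2 * d) →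
    ∀ n₁ n₂ : ℕ, 1 ≤ n₁ → N₀ ≤ n₂ →
    ∀ P : Measure (ℕ → ℝ), IsGaussianProduct ε θ P →
    P {x | ∃ d : ℕ, 1 ≤ d ∧ (d + n₁ < effDim ε τ θ ∨ effDim ε τ θ + n₂ < d) ∧
        critF ε A x d ≤ critF ε A x (effDim ε τ θ)} ≤
      ENNReal.ofReal (Real.exp (-(fSup A t₀) * n₂) / (1 - Real.exp (-(fSup A t₀))) +
        Real.exp (-(gSup A τ) * n₁) / (1 - Real.exp (-(gSup A τ)))) := by
  have hα : 0 < fSup A t₀ := fSup_pos ht₀.le hA1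
  have hβ : 0 < gSup A τ := gSup_pos hA2
  refine ⟨hα, hβ, fun θ hθ htail n₁ n₂ _ hn₂ P hP => ?_⟩
  have := hP.1
  set m := effDim ε τ θ
  have habove := hP.measureReal_exists_critF_add_le hε.ne' hα (m := m) (n := n₂) fun k hk => by
    simpa only [sum_Icc_add_one_eq_sum_Ico] using htail k (hn₂.trans hk)
  have hbelow := hP.measureReal_exists_critF_le_of_add_eq hε.ne' hβ (m := m) (n := n₁)
    fun d k hd hdk => le_sum_sq_of_add_eq_effDim hθ hd hdk
  rw [← ofReal_measureReal]
  refine ENNReal.ofReal_le_ofReal ((measureReal_mono ?_).trans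
    ((measureReal_union_le _ _).trans (add_le_add habove hbelow)))
  rintro x ⟨d, hd, hlt | hlt, hx⟩
  · exact .inr ⟨m - d, by omega, d, hd, by omega, hx⟩
  · exact .inl ⟨d - m, by omega, by rwa [Nat.add_sub_cancel' (by omega)]⟩
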